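/- Let p(m) ∝ φ(m; μ, Σ) Φ(y v'm) be the probit-tilted multivariate Gaussian with Σ positive definite, v a selection vector and y ∈ {-1,1}. Then for the quadratic form along v, the posterior variance satisfies v' Σ⁺ v < v' Σ v, where Σ⁺ is the covariance of p; i.e., the measured coordinate's marginal variance strictly decreases after a probit update. -/

import Mathlib

open MeasureTheory Matrix

noncomputable def stdPdf (x : ℝ) : ℝ :=
  (Real.sqrt (2 * Real.pi))⁻¹ * Real.exp (-x ^ 2 / 2)

noncomputable def stdCdf (x : ℝ) : ℝ := ∫ u in Set.Iic x, stdPdf u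

noncomputable def mvPdf {n : ℕ} (μ : Fin n → ℝ) (S : Matrix (Fin n) (Fin n) ℝ)
    (x : Fin n → ℝ) : ℝ :=
  (Real.sqrt ((2 * Real.pi) ^ n * S.det))⁻¹ *
    Real.exp (-(1 / 2) * ((x - μ) ⬝ᵥ (S⁻¹ *ᵥ (x - μ))))

/-!
The posterior is the Gaussian law tilted by a function of `v'm` alone, so its image under `m ↦ v'm`
is the one-dimensional law `N(v'μ, v'Σv)` tilted by `f x = log Φ(y x)`. By Gaussian integration by
parts (Stein's lemma), tilting `N(m, σ²)` by `f` changes the variance from `σ²` to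
`σ² (1 + Cov(x, f' x))`, and the covariance is negative as soon as `f'` is strictly decreasing.
Here `f' x = y r(y x)` with `r = φ / Φ`, and `r' = -r (x + r)` is negative because
`x Φ(x) + φ(x) = ∫ t in (-∞, x], (x - t) φ(t)` is positive.
-/

open ProbabilityTheory Real

section StandardNormal

theorem stdPdf_pos (x : ℝ) : 0 < stdPdf x := by
  unfold stdPdf
  positivity

theorem continuous_stdPdf : Continuous stdPdf := by
  unfold stdPdf
  fun_prop

theorem stdPdf_eq_gaussianPDFReal : stdPdf = gaussianPDFReal 0 1 := by
  ext x
  simp [stdPdf, gaussianPDFReal]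

theorem integrable_stdPdf : Integrable stdPdf :=
  stdPdf_eq_gaussianPDFReal ▸ integrable_gaussianPDFReal 0 1

theorem stdPdf_le_one (x : ℝ) : stdPdf x ≤ 1 := by
  refine mul_le_one₀ (inv_le_one_of_one_le₀ ?_) (exp_pos _).le ?_
  · rw [one_le_sqrt]
    linarith [pi_gt_three]
  · rw [exp_le_one_iff]
    linarith [sq_nonneg x]

theorem hasDerivAt_stdPdf (x : ℝ) : HasDerivAt stdPdf (-x * stdPdf x) x := by
  have h := ((hasDerivAt_pow 2 x).neg.div_const 2).exp.const_mul (√(2 * π))⁻¹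
  refine h.congr_deriv ?_
  simp only [stdPdf, Pi.neg_apply]
  push_cast
  ring

theorem stdCdf_eq_cdf : stdCdf = cdf (gaussianReal 0 1) := by
  ext x
  rw [cdf_eq_real, measureReal_def, gaussianReal_apply_eq_integral 0 one_ne_zero,
    ← stdPdf_eq_gaussianPDFReal,
    ENNReal.toReal_ofReal (integral_nonneg fun t => (stdPdf_pos t).le), stdCdf]

theorem stdCdf_le_one (x : ℝ) : stdCdf x ≤ 1 :=
  stdCdf_eq_cdf ▸ cdf_le_one _ x

theorem stdCdf_pos (x : ℝ) : 0 < stdCdf x := by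
  rw [stdCdf, setIntegral_pos_iff_support_of_nonneg_ae (ae_of_all _ fun t => (stdPdf_pos t).le)
    integrable_stdPdf.integrableOn]
  simp [Function.support_eq_univ fun t => (stdPdf_pos t).ne']

theorem hasDerivAt_stdCdf (x : ℝ) : HasDerivAt stdCdf (stdPdf x) x := by
  have h : stdCdf = fun u => stdCdf 0 + ∫ t in (0 : ℝ)..u, stdPdf t := by
    ext u
    rw [← intervalIntegral.integral_Iic_sub_Iic integrable_stdPdf.integrableOn
      integrable_stdPdf.integrableOn, stdCdf, stdCdf]
    ring
  rw [h]
  exact (intervalIntegral.integral_hasDerivAt_right (continuous_stdPdf.intervalIntegrable _ _)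
    continuous_stdPdf.aestronglyMeasurable.stronglyMeasurableAtFilter
    continuous_stdPdf.continuousAt).const_add _

theorem continuous_stdCdf : Continuous stdCdf :=
  continuous_iff_continuousAt.2 fun x => (hasDerivAt_stdCdf x).continuousAt

theorem integrable_neg_mul_stdPdf : Integrable fun x => -x * stdPdf x := by
  refine ((integrable_mul_exp_neg_mul_sq (b := 1 / 2) (by norm_num)).const_mul
    (-(√(2 * π))⁻¹)).congr (ae_of_all _ fun x => ?_)
  dsimp only [stdPdf]
  ring_nf

theorem tendsto_stdPdf_atBot : Filter.Tendsto stdPdf Filter.atBot (nhds 0) :=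
  tendsto_zero_of_hasDerivAt_of_integrableOn_Iic (a := 0) (fun x _ => hasDerivAt_stdPdf x)
    integrable_neg_mul_stdPdf.integrableOn integrable_stdPdf.integrableOn

theorem setIntegral_Iic_sub_mul_stdPdf (x : ℝ) :
    ∫ t in Set.Iic x, (x - t) * stdPdf t = x * stdCdf x + stdPdf x := by
  have hmean : ∫ t in Set.Iic x, -t * stdPdf t = stdPdf x := by
    rw [integral_Iic_of_hasDerivAt_of_tendsto' (fun t _ => hasDerivAt_stdPdf t)
      integrable_neg_mul_stdPdf.integrableOn tendsto_stdPdf_atBot, sub_zero]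
  rw [← hmean, stdCdf, ← integral_const_mul, ← integral_add
    (integrable_stdPdf.const_mul x).integrableOn integrable_neg_mul_stdPdf.integrableOn]
  congr with t
  ring

theorem mul_stdCdf_add_stdPdf_pos (x : ℝ) : 0 < x * stdCdf x + stdPdf x := by
  rw [← setIntegral_Iic_sub_mul_stdPdf, integral_Iic_eq_integral_Iio,
    setIntegral_pos_iff_support_of_nonneg_ae]
  · have : Set.Iio x ⊆ Function.support fun t => (x - t) * stdPdf t :=
      fun t ht => (mul_pos (sub_pos.2 ht) (stdPdf_pos t)).ne'
    rw [Set.inter_eq_right.2 this]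
    simp
  · exact (ae_restrict_iff' measurableSet_Iio).2 <| ae_of_all _ fun t ht =>
      (mul_pos (sub_pos.2 ht) (stdPdf_pos t)).le
  · refine ((integrable_stdPdf.const_mul x).add integrable_neg_mul_stdPdf).integrableOn.congr_fun
      (fun t _ => ?_) measurableSet_Iio
    simp only [Pi.add_apply]
    ring

/-- The inverse Mills ratio `φ / Φ` of the standard normal law, the logarithmic derivative of
`Φ`. -/
noncomputable def invMills (x : ℝ) : ℝ := stdPdf x / stdCdf x

theorem hasDerivAt_invMills (x : ℝ) :
    HasDerivAt invMills (-(invMills x * (x + invMills x))) x := by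
  have hΦ := (stdCdf_pos x).ne'
  refine ((hasDerivAt_stdPdf x).div (hasDerivAt_stdCdf x) hΦ).congr_deriv ?_
  unfold invMills
  field_simp
  ring

theorem strictAnti_invMills : StrictAnti invMills := by
  refine strictAnti_of_hasDerivAt_neg hasDerivAt_invMills fun x => neg_neg_of_pos ?_
  have hsum : x + invMills x = (x * stdCdf x + stdPdf x) / stdCdf x := by
    rw [invMills, add_div, mul_div_cancel_right₀ _ (stdCdf_pos x).ne']
  rw [hsum]
  exact mul_pos (div_pos (stdPdf_pos x) (stdCdf_pos x))
    (div_pos (mul_stdCdf_add_stdPdf_pos x) (stdCdf_pos x))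

theorem hasDerivAt_log_stdCdf_const_mul (y x : ℝ) :
    HasDerivAt (fun x => log (stdCdf (y * x))) (y * invMills (y * x)) x := by
  have h := ((hasDerivAt_stdCdf (y * x)).comp x ((hasDerivAt_id x).const_mul y)).log
    (stdCdf_pos _).ne'
  refine h.congr_deriv ?_
  simp only [invMills, Function.comp_apply]
  ring

end StandardNormal

theorem strictAnti_const_mul_comp_const_mul {g : ℝ → ℝ} (hg : StrictAnti g) {c : ℝ}
    (hc : c ≠ 0) : StrictAnti fun x => c * g (c * x) := by
  intro s t hst
  rcases hc.lt_or_gt with hc | hc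
  · exact mul_lt_mul_of_neg_left (hg (mul_lt_mul_of_neg_left hst hc)) hc
  · exact mul_lt_mul_of_pos_left (hg (mul_lt_mul_of_pos_left hst hc)) hc

section Covariance

variable {Ω : Type*} {mΩ : MeasurableSpace Ω}

section Probability

variable {P : Measure Ω} [IsProbabilityMeasure P] {X Y : Ω → ℝ}

theorem integrable_sub_const_mul_sub_const (hX : Integrable X P) (hY : Integrable Y P)
    (hXY : Integrable (fun ω => X ω * Y ω) P) (b c : ℝ) :
    Integrable (fun ω => (X ω - b) * (Y ω - c)) P := by
  refine (((hXY.sub (hX.mul_const c)).sub (hY.const_mul b)).add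
    (integrable_const (b * c))).congr (ae_of_all _ fun ω => ?_)
  simp only [Pi.add_apply, Pi.sub_apply]
  ring

theorem covariance_eq_integral_sub_mul_sub_const (hX : Integrable X P) (hY : Integrable Y P)
    (hXY : Integrable (fun ω => X ω * Y ω) P) (c : ℝ) :
    cov[X, Y; P] = ∫ ω, (X ω - P[X]) * (Y ω - c) ∂P := by
  have hdev : ∫ ω, (X ω - P[X]) ∂P = 0 := by
    rw [integral_sub hX (integrable_const _), integral_const, probReal_univ, one_smul, sub_self]
  rw [covariance, ← sub_eq_zero, ← integral_sub
    (integrable_sub_const_mul_sub_const hX hY hXY _ _)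
    (integrable_sub_const_mul_sub_const hX hY hXY _ _)]
  calc ∫ ω, ((X ω - P[X]) * (Y ω - P[Y]) - (X ω - P[X]) * (Y ω - c)) ∂P
      = ∫ ω, (X ω - P[X]) * (c - P[Y]) ∂P := by congr with ω; ring
    _ = 0 := by rw [integral_mul_const, hdev, zero_mul]

theorem covariance_comp_neg_of_strictAnti {g : ℝ → ℝ} (hg : StrictAnti g) (hX : Integrable X P)
    (hgX : Integrable (fun ω => g (X ω)) P) (hXgX : Integrable (fun ω => X ω * g (X ω)) P)
    (hconst : ¬ ∀ᵐ ω ∂P, X ω = P[X]) : cov[X, fun ω => g (X ω); P] < 0 := by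
  -- Centring `g ∘ X` at `g P[X]` instead of at its mean gives the integrand a constant sign.
  rw [covariance_eq_integral_sub_mul_sub_const hX hgX hXgX (g P[X])]
  set a := P[X]
  have hnonneg (ω : Ω) : 0 ≤ -((X ω - a) * (g (X ω) - g a)) := by
    rw [neg_nonneg]
    rcases le_total (X ω) a with h | h
    · exact mul_nonpos_of_nonpos_of_nonneg (sub_nonpos.2 h) (sub_nonneg.2 (hg.antitone h))
    · exact mul_nonpos_of_nonneg_of_nonpos (sub_nonneg.2 h) (sub_nonpos.2 (hg.antitone h))
  rw [← neg_pos, ← integral_neg]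
  refine (integral_nonneg hnonneg).lt_of_ne' fun h0 => hconst ?_
  filter_upwards [(integral_eq_zero_iff_of_nonneg hnonneg
    (integrable_sub_const_mul_sub_const hX hgX hXgX _ _).neg).1 h0] with ω hω
  rcases mul_eq_zero.1 (neg_eq_zero.1 hω) with h | h
  · exact sub_eq_zero.1 h
  · exact hg.injective (sub_eq_zero.1 h)

end Probability

theorem variance_dotProduct {ι : Type*} [Fintype ι] {P : Measure Ω} [IsFiniteMeasure P]
    {X : Ω → ι → ℝ} (hX : ∀ i, MemLp (fun ω => X ω i) 2 P) (v : ι → ℝ) :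
    Var[fun ω => v ⬝ᵥ X ω; P] =
      v ⬝ᵥ (Matrix.of (fun i j => cov[fun ω => X ω i, fun ω => X ω j; P]) *ᵥ v) := by
  have hvX (i : ι) : MemLp (fun ω => v i * X ω i) 2 P := (hX i).const_mul (v i)
  have hmeas : AEMeasurable (fun ω => v ⬝ᵥ X ω) P :=
    Finset.aemeasurable_fun_sum _ fun i _ => (hvX i).aestronglyMeasurable.aemeasurable
  rw [← covariance_self hmeas]
  simp only [dotProduct, mulVec, of_apply]
  rw [covariance_fun_sum_fun_sum hvX hvX]
  refine Finset.sum_congr rfl fun i _ => ?_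
  rw [Finset.mul_sum]
  refine Finset.sum_congr rfl fun j _ => ?_
  rw [covariance_const_mul_left, covariance_const_mul_right]
  ring

end Covariance

section Tilted

variable {α : Type*} {mα : MeasurableSpace α} {P : Measure α}

theorem memLp_tilted_of_le {f g : α → ℝ} {p : ENNReal} {C : ℝ} (hf : ∀ x, f x ≤ C)
    (hg : MemLp g p P) : MemLp g p (P.tilted f) := by
  refine hg.of_measure_le_smul (c := ENNReal.ofReal (exp C / ∫ x, exp (f x) ∂P))
    ENNReal.ofReal_ne_top ?_
  rw [Measure.tilted, ← withDensity_const]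
  refine withDensity_mono (ae_of_all _ fun x => ENNReal.ofReal_le_ofReal ?_)
  have : 0 ≤ ∫ x, exp (f x) ∂P := integral_nonneg fun x => (exp_pos (f x)).le
  gcongr
  exact hf x

theorem map_tilted_comp {β : Type*} {mβ : MeasurableSpace β} {X : α → β} (hX : Measurable X)
    {f : β → ℝ} (hf : Measurable f) :
    (P.tilted (f ∘ X)).map X = (P.map X).tilted f := by
  have hZ : ∫ x, exp (f (X x)) ∂P = ∫ x, exp (f x) ∂(P.map X) :=
    (integral_map hX.aemeasurable hf.exp.aestronglyMeasurable).symm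
  ext s hs
  rw [Measure.map_apply hX hs, tilted_apply' _ _ (hX hs), tilted_apply' _ _ hs,
    setLIntegral_map hs (by fun_prop) hX]
  simp only [Function.comp_apply, hZ]

end Tilted

section GaussianReal

variable {μ : ℝ} {v : NNReal}

theorem hasDerivAt_gaussianPDFReal (μ : ℝ) (v : NNReal) (x : ℝ) :
    HasDerivAt (gaussianPDFReal μ v) (-((x - μ) / v) * gaussianPDFReal μ v x) x := by
  have h := (((((hasDerivAt_id x).sub_const μ).pow 2).neg.div_const (2 * (v : ℝ))).exp).const_mul
    (√(2 * π * v))⁻¹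
  refine h.congr_deriv ?_
  simp only [gaussianPDFReal, Pi.neg_apply, Pi.pow_apply, id]
  push_cast
  field_simp

theorem integrable_gaussianReal_iff (hv : v ≠ 0) {g : ℝ → ℝ} :
    Integrable g (gaussianReal μ v) ↔ Integrable fun x => gaussianPDFReal μ v x * g x := by
  rw [gaussianReal_of_var_ne_zero μ hv,
    integrable_withDensity_iff_integrable_smul' (measurable_gaussianPDF μ v)
      (ae_of_all _ fun _ => gaussianPDF_lt_top)]
  simp only [toReal_gaussianPDF, smul_eq_mul]

theorem integral_sub_mul_gaussianReal {g g' : ℝ → ℝ} (hg : ∀ x, HasDerivAt g (g' x) x)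
    (hg_int : Integrable g (gaussianReal μ v)) (hg'_int : Integrable g' (gaussianReal μ v))
    (hsub_int : Integrable (fun x => (x - μ) * g x) (gaussianReal μ v)) :
    ∫ x, (x - μ) * g x ∂gaussianReal μ v = v * ∫ x, g' x ∂gaussianReal μ v := by
  rcases eq_or_ne v 0 with rfl | hv
  · simp
  rw [integrable_gaussianReal_iff hv] at hg_int hg'_int hsub_int
  have hparts := integral_mul_deriv_eq_deriv_mul_of_integrable
    (fun x _ => hasDerivAt_gaussianPDFReal μ v x) (fun x _ => hg x) hg'_int
    ((hsub_int.const_mul (-(v : ℝ)⁻¹)).congr (ae_of_all _ fun x => by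
      simp only [Pi.mul_apply]; ring)) hg_int
  rw [integral_gaussianReal_eq_integral_smul hv, integral_gaussianReal_eq_integral_smul hv]
  simp only [smul_eq_mul]
  rw [hparts, ← integral_neg, ← integral_const_mul]
  refine integral_congr_ae (ae_of_all _ fun x => ?_)
  dsimp only
  have : (v : ℝ) ≠ 0 := by exact_mod_cast hv
  field_simp

section TiltedGaussianReal

variable {f f' : ℝ → ℝ}

theorem integral_sub_mul_tilted_gaussianReal {g g' : ℝ → ℝ} (hf : ∀ x, HasDerivAt f (f' x) x)
    (hg : ∀ x, HasDerivAt g (g' x) x)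
    (hexp : Integrable (fun x => exp (f x)) (gaussianReal μ v))
    (hg_int : Integrable g ((gaussianReal μ v).tilted f))
    (hg'_int : Integrable (fun x => g' x + g x * f' x) ((gaussianReal μ v).tilted f))
    (hsub_int : Integrable (fun x => (x - μ) * g x) ((gaussianReal μ v).tilted f)) :
    ∫ x, (x - μ) * g x ∂(gaussianReal μ v).tilted f =
      v * ∫ x, g' x + g x * f' x ∂(gaussianReal μ v).tilted f := by
  rw [integrable_tilted_iff hexp] at hg_int hg'_int hsub_int
  have hstein := integral_sub_mul_gaussianReal
    (fun x => ((hf x).exp.mul (hg x)).congr_deriv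
      (show _ = exp (f x) * (g' x + g x * f' x) by ring))
    hg_int hg'_int (hsub_int.congr (ae_of_all _ fun x => by
      simp only [smul_eq_mul, Pi.mul_apply]; ring))
  simp only [integral_tilted, smul_eq_mul, div_mul_eq_mul_div, integral_div]
  rw [mul_div_assoc', ← hstein]
  congr with x
  simp only [Pi.mul_apply]
  ring

theorem variance_id_tilted_gaussianReal (hf : ∀ x, HasDerivAt f (f' x) x)
    (hexp : Integrable (fun x => exp (f x)) (gaussianReal μ v))
    (hid : MemLp id 2 ((gaussianReal μ v).tilted f))
    (hf' : Integrable f' ((gaussianReal μ v).tilted f))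
    (hidf' : Integrable (fun x => x * f' x) ((gaussianReal μ v).tilted f)) :
    Var[id; (gaussianReal μ v).tilted f] =
      v * (1 + cov[id, f'; (gaussianReal μ v).tilted f]) := by
  have := isProbabilityMeasure_tilted hexp
  set ρ := (gaussianReal μ v).tilted f
  have hid1 : Integrable id ρ := hid.integrable one_le_two
  have hid2 : Integrable (fun x => id x * id x) ρ := hid.integrable_mul hid
  have hdev : Integrable (fun x => (id x - ρ[id]) * f' x) ρ := by
    simpa only [sub_zero] using integrable_sub_const_mul_sub_const hid1 hf' hidf' ρ[id] 0
  have hstein := integral_sub_mul_tilted_gaussianReal hf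
    (fun x => (hasDerivAt_id x).sub_const ρ[id]) hexp (hid1.sub (integrable_const _))
    ((integrable_const 1).add hdev) (integrable_sub_const_mul_sub_const hid1 hid1 hid2 μ ρ[id])
  calc Var[id; ρ]
      = ∫ x, (x - μ) * (x - ρ[id]) ∂ρ := by
        rw [← covariance_self aemeasurable_id,
          covariance_eq_integral_sub_mul_sub_const hid1 hid1 hid2 μ]
        simp only [mul_comm, id]
    _ = v * ∫ x, 1 + (id x - ρ[id]) * f' x ∂ρ := hstein
    _ = v * (1 + ∫ x, (id x - ρ[id]) * f' x ∂ρ) := by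
        rw [integral_add (integrable_const 1) hdev, integral_const, probReal_univ, one_smul]
    _ = v * (1 + cov[id, f'; ρ]) := by
        rw [covariance_eq_integral_sub_mul_sub_const hid1 hf' hidf' 0]
        simp only [sub_zero]

theorem variance_id_tilted_gaussianReal_lt (hv : v ≠ 0) (hf : ∀ x, HasDerivAt f (f' x) x)
    (hf'_anti : StrictAnti f')
    (hexp : Integrable (fun x => exp (f x)) (gaussianReal μ v))
    (hid : MemLp id 2 ((gaussianReal μ v).tilted f))
    (hf' : Integrable f' ((gaussianReal μ v).tilted f))
    (hidf' : Integrable (fun x => x * f' x) ((gaussianReal μ v).tilted f)) :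
    Var[id; (gaussianReal μ v).tilted f] < v := by
  have := isProbabilityMeasure_tilted hexp
  have := nullSingletonClass_gaussianReal (μ := μ) hv
  set ρ := (gaussianReal μ v).tilted f
  have hconst : ¬ ∀ᵐ x ∂ρ, id x = ρ[id] := fun h => by
    have hne : ∀ᵐ x ∂ρ, x ≠ ρ[id] :=
      (tilted_absolutelyContinuous _ f).ae_le (Measure.ae_ne _ _)
    obtain ⟨x, hx, hx'⟩ := (h.and hne).exists
    exact hx' hx
  have hcov : cov[id, f'; ρ] < 0 :=
    covariance_comp_neg_of_strictAnti hf'_anti (hid.integrable one_le_two) hf' hidf' hconst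
  rw [variance_id_tilted_gaussianReal hf hexp hid hf' hidf']
  exact mul_lt_of_lt_one_right (by positivity) (by linarith)

end TiltedGaussianReal

end GaussianReal

section Fintype

variable {ι : Type*} [Fintype ι]

theorem pi_withDensity_ofReal {α : ι → Type*} [∀ i, MeasurableSpace (α i)]
    {P : ∀ i, Measure (α i)} [∀ i, SigmaFinite (P i)]
    {f : ∀ i, α i → ℝ} (hf : ∀ i, Integrable (f i) (P i)) (hf_nonneg : ∀ i x, 0 ≤ f i x) :
    Measure.pi (fun i => (P i).withDensity fun x => ENNReal.ofReal (f i x)) =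
      (Measure.pi P).withDensity fun x => ENNReal.ofReal (∏ i, f i (x i)) := by
  have (i : ι) : SigmaFinite ((P i).withDensity fun x => ENNReal.ofReal (f i x)) :=
    SigmaFinite.withDensity_of_ne_top (ae_of_all _ fun _ => ENNReal.ofReal_ne_top)
  refine Measure.pi_eq fun s hs => ?_
  have hprod_nonneg (x : ∀ i, α i) : 0 ≤ ∏ i, f i (x i) :=
    Finset.prod_nonneg fun i _ => hf_nonneg i (x i)
  rw [withDensity_apply _ (MeasurableSet.univ_pi hs), Measure.restrict_pi_pi,
    ← ofReal_integral_eq_lintegral_ofReal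
      (Integrable.fintype_prod_dep fun i => (hf i).restrict) (ae_of_all _ hprod_nonneg),
    integral_fintype_prod_eq_prod,
    ENNReal.ofReal_prod_of_nonneg fun i _ => integral_nonneg (hf_nonneg i)]
  refine Finset.prod_congr rfl fun i _ => ?_
  rw [withDensity_apply _ (hs i),
    ofReal_integral_eq_lintegral_ofReal (hf i).restrict (ae_of_all _ (hf_nonneg i))]

theorem map_withDensity_add_mulVec [DecidableEq ι] {A : Matrix ι ι ℝ} (hA : A.det ≠ 0)
    (b : ι → ℝ) {g : (ι → ℝ) → ENNReal} (hg : Measurable g) :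
    (volume.withDensity g).map (fun x => b + A *ᵥ x) =
      volume.withDensity fun x => ENNReal.ofReal |A.det⁻¹| * g (A⁻¹ *ᵥ (x - b)) := by
  have hmeas : Measurable fun x : ι → ℝ => b + A *ᵥ x := by fun_prop
  have hinv (x : ι → ℝ) : A⁻¹ *ᵥ (b + A *ᵥ x - b) = x := by
    rw [add_sub_cancel_left, mulVec_mulVec, nonsing_inv_mul _ hA.isUnit, one_mulVec]
  have hmap : (volume : Measure (ι → ℝ)).map (fun x => b + A *ᵥ x) =
      ENNReal.ofReal |A.det⁻¹| • volume := by
    calc (volume : Measure (ι → ℝ)).map (fun x => b + A *ᵥ x)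
        = (volume.map (toLin' A)).map (b + ·) :=
          (Measure.map_map (by fun_prop) (by fun_prop)).symm
      _ = ENNReal.ofReal |A.det⁻¹| • volume := by
          rw [Real.map_matrix_volume_pi_eq_smul_volume_pi hA, Measure.map_smul,
            map_add_left_eq_self]
  ext s hs
  rw [Measure.map_apply hmeas hs, withDensity_apply _ (hmeas hs), withDensity_apply _ hs,
    lintegral_const_mul _ (by fun_prop), ← smul_eq_mul, ← lintegral_smul_measure,
    ← Measure.restrict_smul, ← hmap, setLIntegral_map hs (by fun_prop) hmeas]
  simp only [hinv]

open scoped MatrixOrder in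
theorem sqrt_mul_transpose_sqrt [DecidableEq ι] {S : Matrix ι ι ℝ} (hS : S.PosSemidef) :
    CFC.sqrt S * (CFC.sqrt S)ᵀ = S := by
  have hsymm : (CFC.sqrt S)ᵀ = CFC.sqrt S := by
    rw [← conjTranspose_eq_transpose_of_trivial]
    exact (CFC.sqrt_nonneg S).isSelfAdjoint
  rw [hsymm, CFC.sqrt_mul_sqrt_self S hS.nonneg]

end Fintype

section MultivariateGaussian

open WithLp
open scoped MatrixOrder

variable {n : ℕ} {μ : Fin n → ℝ} {S : Matrix (Fin n) (Fin n) ℝ}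

theorem mvPdf_nonneg (μ : Fin n → ℝ) (S : Matrix (Fin n) (Fin n) ℝ) (x : Fin n → ℝ) :
    0 ≤ mvPdf μ S x := by
  unfold mvPdf
  positivity

theorem continuous_mvPdf (μ : Fin n → ℝ) (S : Matrix (Fin n) (Fin n) ℝ) :
    Continuous (mvPdf μ S) := by
  unfold mvPdf
  fun_prop

theorem mvPdf_zero_one (x : Fin n → ℝ) : mvPdf 0 1 x = ∏ i, gaussianPDFReal 0 1 (x i) := by
  simp only [mvPdf, gaussianPDFReal, Finset.prod_mul_distrib, ← exp_sum, det_one, mul_one,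
    inv_one, one_mulVec, sub_zero, dotProduct, Finset.prod_const, Finset.card_univ,
    Fintype.card_fin, NNReal.coe_one, inv_pow]
  congr 2
  · rw [sqrt_eq_iff_eq_sq (by positivity) (by positivity), ← pow_mul, mul_comm n, pow_mul,
      sq_sqrt (by positivity)]
  · rw [Finset.mul_sum]
    congr with i
    ring

theorem mvPdf_mul_transpose {A : Matrix (Fin n) (Fin n) ℝ} (x : Fin n → ℝ) :
    mvPdf μ (A * Aᵀ) x = |A.det⁻¹| * mvPdf 0 1 (A⁻¹ *ᵥ (x - μ)) := by
  have hquad : (x - μ) ⬝ᵥ ((A * Aᵀ)⁻¹ *ᵥ (x - μ)) =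
      (A⁻¹ *ᵥ (x - μ)) ⬝ᵥ (A⁻¹ *ᵥ (x - μ)) := by
    rw [Matrix.mul_inv_rev, ← mulVec_mulVec, dotProduct_mulVec, ← transpose_nonsing_inv,
      vecMul_transpose]
  have hdet : √((2 * π) ^ n * (A * Aᵀ).det) = |A.det| * √((2 * π) ^ n) := by
    rw [det_mul, det_transpose, sqrt_mul (by positivity), sqrt_mul_self_eq_abs, mul_comm]
  simp only [mvPdf, hdet, hquad, det_one, mul_one, inv_one, one_mulVec, sub_zero, mul_inv, abs_inv,
    mul_assoc]

theorem pi_gaussianReal_zero_one :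
    Measure.pi (fun _ : Fin n => gaussianReal 0 1) =
      volume.withDensity fun x => ENNReal.ofReal (mvPdf 0 1 x) := by
  simp only [gaussianReal_of_var_ne_zero 0 one_ne_zero, gaussianPDF_def, mvPdf_zero_one]
  exact pi_withDensity_ofReal (fun _ => integrable_gaussianPDFReal 0 1)
    fun _ => gaussianPDFReal_nonneg 0 1

/-- The prior: for positive definite `S`, the Gaussian law on `ℝⁿ` with mean `μ` and covariance `S`,
defined by its density so that it makes sense on `Fin n → ℝ`. -/
noncomputable def mvGaussian (μ : Fin n → ℝ) (S : Matrix (Fin n) (Fin n) ℝ) :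
    Measure (Fin n → ℝ) :=
  volume.withDensity fun x => ENNReal.ofReal (mvPdf μ S x)

theorem map_ofLp_multivariateGaussian (hS : S.PosDef) :
    (multivariateGaussian (toLp 2 μ) S).map ofLp = mvGaussian μ S := by
  set A := CFC.sqrt S
  have hAA : A * Aᵀ = S := sqrt_mul_transpose_sqrt hS.posSemidef
  have hA : A.det ≠ 0 := left_ne_zero_of_mul (by rw [← det_mul, hAA]; exact hS.det_pos.ne')
  rw [multivariateGaussian, ← map_pi_eq_stdGaussian, Measure.map_map (by fun_prop) (by fun_prop),
    Measure.map_map (by fun_prop) (by fun_prop)]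
  calc (Measure.pi fun _ => gaussianReal 0 1).map (fun x => μ + A *ᵥ x)
      = mvGaussian μ (A * Aᵀ) := by
        have hmeas : Measurable (mvPdf (0 : Fin n → ℝ) 1) := (continuous_mvPdf 0 1).measurable
        rw [pi_gaussianReal_zero_one, map_withDensity_add_mulVec hA _ (by fun_prop), mvGaussian]
        simp only [mvPdf_mul_transpose, ENNReal.ofReal_mul (abs_nonneg _)]
    _ = mvGaussian μ S := by rw [hAA]

theorem isGaussian_mvGaussian (hS : S.PosDef) : IsGaussian (mvGaussian μ S) := by
  rw [← map_ofLp_multivariateGaussian hS]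
  exact isGaussian_map (PiLp.continuousLinearEquiv 2 ℝ fun _ : Fin n => ℝ).toContinuousLinearMap

theorem map_dotProduct_mvGaussian (hS : S.PosDef) (v : Fin n → ℝ) :
    (mvGaussian μ S).map (v ⬝ᵥ ·) = gaussianReal (v ⬝ᵥ μ) (v ⬝ᵥ (S *ᵥ v)).toNNReal := by
  set P := multivariateGaussian (toLp 2 μ) S
  set L : StrongDual ℝ (EuclideanSpace ℝ (Fin n)) := innerSL ℝ (toLp 2 v)
  have hL : (v ⬝ᵥ ·) ∘ ofLp = L := by
    ext x
    simp [L, EuclideanSpace.inner_eq_star_dotProduct, dotProduct_comm]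
  have hmean : P[L] = v ⬝ᵥ μ := by
    rw [L.integral_comp_id_comm IsGaussian.integrable_id, integral_id_multivariateGaussian, ← hL]
    rfl
  have hvar : Var[L; P] = v ⬝ᵥ (S *ᵥ v) := by
    rw [← covarianceBilin_multivariateGaussian (μ := toLp 2 μ) hS.posSemidef (toLp 2 v) (toLp 2 v),
      covarianceBilin_self IsGaussian.memLp_two_id]
    rfl
  rw [← map_ofLp_multivariateGaussian hS, Measure.map_map (by fun_prop) (by fun_prop), hL,
    IsGaussian.map_eq_gaussianReal, hmean, hvar]

theorem integral_mvGaussian (g : (Fin n → ℝ) → ℝ) :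
    ∫ m, g m ∂mvGaussian μ S = ∫ m, mvPdf μ S m * g m := by
  have hmeas : Measurable (mvPdf μ S) := (continuous_mvPdf μ S).measurable
  rw [mvGaussian, integral_withDensity_eq_integral_toReal_smul (by fun_prop)
    (ae_of_all _ fun _ => ENNReal.ofReal_lt_top)]
  simp only [ENNReal.toReal_ofReal (mvPdf_nonneg μ S _), smul_eq_mul]

end MultivariateGaussian

section Probit

theorem integrable_exp_log_stdCdf {Ω : Type*} {mΩ : MeasurableSpace Ω} {P : Measure Ω}
    [IsFiniteMeasure P] {X : Ω → ℝ} (hX : Measurable X) :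
    Integrable (fun ω => exp (log (stdCdf (X ω)))) P := by
  simp only [exp_log (stdCdf_pos _)]
  refine Integrable.of_bound (continuous_stdCdf.measurable.comp hX).aestronglyMeasurable 1
    (ae_of_all _ fun ω => ?_)
  rw [norm_of_nonneg (stdCdf_pos _).le]
  exact stdCdf_le_one _

theorem variance_id_probit_tilted_gaussianReal_lt {m y : ℝ} {w : NNReal} (hw : w ≠ 0)
    (hy : y ≠ 0) : Var[id; (gaussianReal m w).tilted fun x => log (stdCdf (y * x))] < w := by
  have hexp := integrable_exp_log_stdCdf (P := gaussianReal m w) (measurable_const_mul y)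
  have hpdf : Continuous fun x => y * stdPdf (y * x) := by
    have := continuous_stdPdf
    fun_prop
  have hpdf_le (x : ℝ) : ‖y * stdPdf (y * x)‖ ≤ |y| := by
    rw [norm_mul, norm_of_nonneg (stdPdf_pos _).le]
    exact mul_le_of_le_one_right (abs_nonneg y) (stdPdf_le_one _)
  have hderiv (x : ℝ) :
      exp (log (stdCdf (y * x))) * (y * invMills (y * x)) = y * stdPdf (y * x) := by
    rw [exp_log (stdCdf_pos _), invMills, mul_left_comm, mul_div_cancel₀ _ (stdCdf_pos _).ne']
  refine variance_id_tilted_gaussianReal_lt hw (hasDerivAt_log_stdCdf_const_mul y)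
    (strictAnti_const_mul_comp_const_mul strictAnti_invMills hy) hexp
    (memLp_tilted_of_le (fun x => log_nonpos (stdCdf_pos _).le (stdCdf_le_one _))
      (memLp_id_gaussianReal 2)) ?_ ?_
  · rw [integrable_tilted_iff hexp]
    simp only [smul_eq_mul, hderiv]
    exact Integrable.of_bound hpdf.aestronglyMeasurable |y| (ae_of_all _ hpdf_le)
  · rw [integrable_tilted_iff hexp]
    simp only [smul_eq_mul, mul_left_comm _ (_ : ℝ) (y * _), hderiv]
    exact ((memLp_id_gaussianReal 1).integrable le_rfl).mul_bdd hpdf.aestronglyMeasurable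
      (ae_of_all _ hpdf_le)

variable {n : ℕ} {μ : Fin n → ℝ} {S : Matrix (Fin n) (Fin n) ℝ} {v : Fin n → ℝ} {y : ℝ}

/-- The posterior law of a Gaussian vector `m` after a probit observation `y` in the direction `v`:
tilting by the log-likelihood `log Φ(y v'm)` is multiplying by `Φ(y v'm)` and normalizing. -/
noncomputable def probitPosterior (μ : Fin n → ℝ) (S : Matrix (Fin n) (Fin n) ℝ) (v : Fin n → ℝ)
    (y : ℝ) : Measure (Fin n → ℝ) :=
  (mvGaussian μ S).tilted fun m => log (stdCdf (y * (v ⬝ᵥ m)))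

theorem integral_probitPosterior (g : (Fin n → ℝ) → ℝ) :
    ∫ m, g m ∂probitPosterior μ S v y =
      ∫ m, g m * ((∫ m, mvPdf μ S m * stdCdf (y * (v ⬝ᵥ m)))⁻¹ * mvPdf μ S m *
        stdCdf (y * (v ⬝ᵥ m))) := by
  simp only [probitPosterior, integral_tilted, exp_log (stdCdf_pos _), integral_mvGaussian,
    smul_eq_mul]
  congr with m
  ring

theorem isProbabilityMeasure_probitPosterior (hS : S.PosDef) :
    IsProbabilityMeasure (probitPosterior μ S v y) :=
  have := isGaussian_mvGaussian (μ := μ) hS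
  isProbabilityMeasure_tilted
    (integrable_exp_log_stdCdf (X := fun m => y * (v ⬝ᵥ m)) (by fun_prop))

theorem memLp_eval_probitPosterior (hS : S.PosDef) (i : Fin n) :
    MemLp (fun m => m i) 2 (probitPosterior μ S v y) :=
  have := isGaussian_mvGaussian (μ := μ) hS
  memLp_tilted_of_le (fun _ => log_nonpos (stdCdf_pos _).le (stdCdf_le_one _))
    (IsGaussian.memLp_dual (mvGaussian μ S) (ContinuousLinearMap.proj i) 2 (by norm_num))

theorem map_dotProduct_probitPosterior (hS : S.PosDef) :
    (probitPosterior μ S v y).map (v ⬝ᵥ ·) =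
      (gaussianReal (v ⬝ᵥ μ) (v ⬝ᵥ (S *ᵥ v)).toNNReal).tilted fun x => log (stdCdf (y * x)) := by
  have hmeas := continuous_stdCdf.measurable
  rw [← map_dotProduct_mvGaussian hS]
  exact map_tilted_comp (X := (v ⬝ᵥ ·)) (f := fun x => log (stdCdf (y * x))) (by fun_prop)
    (by fun_prop)

theorem variance_dotProduct_probitPosterior_lt (hS : S.PosDef) (hv : v ≠ 0) (hy : y ≠ 0) :
    Var[fun m => v ⬝ᵥ m; probitPosterior μ S v y] < v ⬝ᵥ (S *ᵥ v) := by
  have hpos : 0 < v ⬝ᵥ (S *ᵥ v) := hS.dotProduct_mulVec_pos hv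
  calc Var[fun m => v ⬝ᵥ m; probitPosterior μ S v y]
      = Var[id; (probitPosterior μ S v y).map (v ⬝ᵥ ·)] :=
        (variance_map aemeasurable_id (by fun_prop : Measurable (v ⬝ᵥ ·)).aemeasurable).symm
    _ < (v ⬝ᵥ (S *ᵥ v)).toNNReal := by
        rw [map_dotProduct_probitPosterior hS]
        exact variance_id_probit_tilted_gaussianReal_lt (toNNReal_pos.2 hpos).ne' hy
    _ = v ⬝ᵥ (S *ᵥ v) := coe_toNNReal _ hpos.le

end Probit

theorem stmt19_general {n : ℕ} (μ : Fin n → ℝ) (S : Matrix (Fin n) (Fin n) ℝ)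
    (hS : S.PosDef) (v : Fin n → ℝ) (hv : v ≠ 0) (y : ℝ) (hy : y ≠ 0)
    (Z : ℝ) (hZ : Z = ∫ m : Fin n → ℝ, mvPdf μ S m * stdCdf (y * (v ⬝ᵥ m)))
    (p : (Fin n → ℝ) → ℝ)
    (hp : p = fun m => Z⁻¹ * mvPdf μ S m * stdCdf (y * (v ⬝ᵥ m)))
    (μplus : Fin n → ℝ) (hμplus : ∀ j, μplus j = ∫ m : Fin n → ℝ, m j * p m)
    (Splus : Matrix (Fin n) (Fin n) ℝ)
    (hSplus : ∀ i j, Splus i j =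
      ∫ m : Fin n → ℝ, (m i - μplus i) * (m j - μplus j) * p m) :
    v ⬝ᵥ (Splus *ᵥ v) < v ⬝ᵥ (S *ᵥ v) := by
  set P := probitPosterior μ S v y
  have := isProbabilityMeasure_probitPosterior (μ := μ) (v := v) (y := y) hS
  have hintegral (g : (Fin n → ℝ) → ℝ) : ∫ m, g m ∂P = ∫ m, g m * p m := by
    rw [integral_probitPosterior, ← hZ, hp]
  have hcov : Splus = of fun i j => cov[fun m => m i, fun m => m j; P] := by
    ext i j
    rw [hSplus, of_apply, covariance, hintegral]
    simp only [hμplus, hintegral]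
  rw [hcov, ← variance_dotProduct (memLp_eval_probitPosterior hS)]
  exact variance_dotProduct_probitPosterior_lt hS hv hy

/-- A probit update strictly decreases the measured coordinate's marginal
variance: `v'Σ⁺v < v'Σv`, where `Σ⁺` is the covariance of the tilted posterior
`p(m) ∝ φ(m; μ, Σ)Φ(y v'm)`. -/
theorem stmt19 {n : ℕ} (μ : Fin n → ℝ) (S : Matrix (Fin n) (Fin n) ℝ)
    (hS : S.PosDef) (v : Fin n → ℝ) (hv : ∃ i, v = Pi.single i 1)
    (y : ℝ) (hy : y = -1 ∨ y = 1)
    (Z : ℝ) (hZ : Z = ∫ m : Fin n → ℝ, mvPdf μ S m * stdCdf (y * (v ⬝ᵥ m)))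
    (p : (Fin n → ℝ) → ℝ)
    (hp : p = fun m => Z⁻¹ * mvPdf μ S m * stdCdf (y * (v ⬝ᵥ m)))
    (μplus : Fin n → ℝ) (hμplus : ∀ j, μplus j = ∫ m : Fin n → ℝ, m j * p m)
    (Splus : Matrix (Fin n) (Fin n) ℝ)
    (hSplus : ∀ i j, Splus i j =
      ∫ m : Fin n → ℝ, (m i - μplus i) * (m j - μplus j) * p m) :
    v ⬝ᵥ (Splus *ᵥ v) < v ⬝ᵥ (S *ᵥ v) := by
  obtain ⟨i, rfl⟩ := hv
  exact stmt19_general μ S hS _ (by simp) y (by rcases hy with rfl | rfl <;> norm_num) Z hZ p hp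
    μplus hμplus Splus hSplus
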